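/- arXiv:2110.01597 — 2 statements merged into one kernel-verified Lean document; each statement's English description precedes it below -/
import Mathlib

section
/- Let b, t, I ∈ M satisfy σ(b) = b and b^{n/d} = t · I · σ(I)^{−1}. Then I^n · w(t) = b^{n²(d+1)/(2d)} · (∏_{j=0}^{d−1} σ^j(I))^{n/d}, where the exponent n²(d+1)/(2d) is an integer because d divides n. -/
theorem aux_one {M : Type*} [CommGroup M] (m : ℕ) (σ : MulAut M) (b t I : M)
    (hb : σ b = b) (hbt : b ^ m * σ I = t * I) (k : ℕ) :
    I * ∏ j ∈ Finset.range k, (σ ^ j) t = b ^ (m * k) * (σ ^ k) I := by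
  have hbk : ∀ k : ℕ, (σ ^ k) b = b := by
    intro k
    induction k with
    | zero => simp
    | succ k ih => rw [pow_succ, MulAut.mul_apply, hb, ih]
  induction k with
  | zero => simp
  | succ k ih =>
    have h := congrArg (σ ^ k) hbt
    rw [map_mul, map_mul, map_pow, hbk, ← MulAut.mul_apply, ← pow_succ] at h
    rw [Finset.prod_range_succ, ← mul_assoc, ih, mul_assoc, mul_comm ((σ ^ k) I), ← h,
      ← mul_assoc, ← pow_add, Nat.mul_succ]

theorem aux_two {M : Type*} [CommGroup M] (m : ℕ) (σ : MulAut M) (b t I : M)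
    (hb : σ b = b) (hbt : b ^ m * σ I = t * I) (k : ℕ) :
    I ^ k * ∏ j ∈ Finset.range k, ((σ ^ j) t) ^ (k - j) =
      b ^ (m * ∑ i ∈ Finset.range (k + 1), i) * ∏ j ∈ Finset.range k, (σ ^ (j + 1)) I := by
  induction k with
  | zero => simp
  | succ k ih =>
    have h1 := aux_one m σ b t I hb hbt (k + 1)
    have h2 : ∏ j ∈ Finset.range (k + 1), ((σ ^ j) t) ^ (k + 1 - j) =
        (∏ j ∈ Finset.range k, ((σ ^ j) t) ^ (k - j)) *
          ∏ j ∈ Finset.range (k + 1), (σ ^ j) t := by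
      rw [Finset.prod_range_succ, Finset.prod_range_succ _ k, ← mul_assoc,
        ← Finset.prod_mul_distrib]
      congr 1
      · refine Finset.prod_congr rfl fun j hj => ?_
        have := Finset.mem_range.1 hj
        rw [← pow_succ]
        congr 1
        omega
      · simp
    rw [h2, pow_succ, mul_mul_mul_comm, ih, h1, Finset.sum_range_succ _ (k + 1),
      Finset.prod_range_succ _ k, mul_add m (∑ i ∈ Finset.range (k + 1), i), pow_add b,
      mul_mul_mul_comm]

/-- With `σ^d = id`, `σ(b) = b` and `b^{n/d} = t·I·σ(I)⁻¹`, one has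
`I^n · w(t) = b^{n²(d+1)/(2d)} · (∏_{j<d} σ^j(I))^{n/d}`, the exponent
`n²(d+1)/(2d)` being an integer. -/
theorem stmt5 {M : Type*} [CommGroup M] (d n : ℕ) (hd : 0 < d) (hn : 0 < n)
    (hdn : d ∣ n) (σ : MulAut M) (hσ : σ ^ d = 1) (b t I : M)
    (hb : σ b = b) (hbt : b ^ (n / d) = t * I * (σ I)⁻¹) :
    2 * d ∣ n ^ 2 * (d + 1) ∧
    I ^ n * ∏ j ∈ Finset.range d, ((σ ^ j) t) ^ (n - j * (n / d)) =
      b ^ (n ^ 2 * (d + 1) / (2 * d)) *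
        (∏ j ∈ Finset.range d, (σ ^ j) I) ^ (n / d) := by
  obtain ⟨m, rfl⟩ := hdn
  have hm : d * m / d = m := Nat.mul_div_cancel_left m hd
  rw [hm] at hbt ⊢
  have hs : (∑ i ∈ Finset.range (d + 1), i) * 2 = (d + 1) * d := by
    simpa using Finset.sum_range_id_mul_two (d + 1)
  have he : (d * m) ^ 2 * (d + 1) = 2 * d * (m * (∑ i ∈ Finset.range (d + 1), i) * m) := by
    calc (d * m) ^ 2 * (d + 1) = d * m * m * ((d + 1) * d) := by ring
      _ = _ := by rw [← hs]; ring
  refine ⟨⟨_, he⟩, ?_⟩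
  rw [he, Nat.mul_div_cancel_left _ (by positivity)]
  have h := aux_two m σ b t I hb (by rw [hbt]; simp) d
  have hshift : ∏ j ∈ Finset.range d, (σ ^ (j + 1)) I = ∏ j ∈ Finset.range d, (σ ^ j) I := by
    have h1 := Finset.prod_range_succ (fun j => (σ ^ j) I) d
    rw [Finset.prod_range_succ', hσ, pow_zero] at h1
    exact mul_right_cancel h1
  rw [hshift] at h
  have h' := congrArg (· ^ m) h
  simp only [mul_pow, ← pow_mul, ← Finset.prod_pow] at h'
  rw [← Finset.prod_pow, ← h']
  congr 1
  refine Finset.prod_congr rfl fun j _ => ?_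
  rw [Nat.sub_mul]
end

section
/- Let b, t, I ∈ M with σ(b) = b and b^{n/d} = t · I · σ(I)^{−1}. Then: (i) the vector v = (I, bI, b²I, …, b^{m−1}I) ∈ M^m satisfies σ'(v)·v^{−1} = (t·b^{−1}, b^{−1}, …, b^{−1}); and (ii) if moreover ∏_{j=0}^{d−1} σ^j(t) = b^{−1}, then setting w = ∏_{j=0}^{d−1} σ^j(t)^{n − j·n/d}, the vector u = (w, bw, b²w, …, b^{m−1}w) ∈ M^m satisfies σ'(u)·u^{−1} = (b^{−1}·t^{−n}, b^{−1}, …, b^{−1}). -/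
/-- The twisted cyclic shift `σ'(a_1, …, a_m) = (σ(a_m), a_1, …, a_{m−1})` on `M^m`
(indexed by `Fin m`): the `0`-th entry of `σ' a` is `σ` applied to the last entry of
`a`, and the `i`-th entry is the `(i-1)`-st entry of `a` for `i ≠ 0`. -/
def twistedShift {M : Type*} [CommGroup M] (σ : MulAut M) {m : ℕ}
    (a : Fin m → M) : Fin m → M :=
  fun i =>
    if (i : ℕ) = 0 then σ (a ⟨m - 1, Nat.sub_lt i.pos Nat.one_pos⟩)
    else a ⟨(i : ℕ) - 1, Nat.lt_of_le_of_lt (Nat.sub_le _ _) i.isLt⟩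

theorem shift_aux {M : Type*} [CommGroup M] (σ : MulAut M) (m : ℕ) (b s w : M)
    (hb : σ b = b) (hw : σ w * b ^ m = s * w) :
    twistedShift σ (fun i : Fin m => b ^ (i : ℕ) * w) *
        (fun i : Fin m => b ^ (i : ℕ) * w)⁻¹ =
      fun i : Fin m => if (i : ℕ) = 0 then s * b⁻¹ else b⁻¹ := by
  funext i
  obtain ⟨i, hi⟩ := i
  simp only [twistedShift, Pi.mul_apply, Pi.inv_apply]
  rcases i with _ | k
  · obtain ⟨r, rfl⟩ : ∃ r, m = r + 1 := ⟨m - 1, by omega⟩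
    simp only [if_true, map_mul, map_pow, hb, pow_zero, one_mul, Nat.add_sub_cancel]
    rw [mul_inv_eq_iff_eq_mul, mul_right_comm, ← hw, pow_succ, ← mul_assoc,
      mul_inv_cancel_right, mul_comm]
  · simp only [Nat.add_sub_cancel, Nat.succ_ne_zero, if_false]
    rw [mul_inv_eq_iff_eq_mul, pow_succ', mul_assoc, inv_mul_cancel_left]

/-- For `b, t, I ∈ M` with `σ(b) = b` and `b^{n/d} = t·I·σ(I)⁻¹`:
(i) `v = (I, bI, …, b^{m−1}I)` satisfies `σ'(v)·v⁻¹ = (t·b⁻¹, b⁻¹, …, b⁻¹)`;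
(ii) if moreover `∏_{j<d} σ^j(t) = b⁻¹` then, with
`w = ∏_{j<d} σ^j(t)^{n−j·n/d}`, the vector `u = (w, bw, …, b^{m−1}w)` satisfies
`σ'(u)·u⁻¹ = (b⁻¹·t^{−n}, b⁻¹, …, b⁻¹)`. -/
theorem stmt13 {M : Type*} [CommGroup M] (d n : ℕ) (hd : 0 < d) (hn : 0 < n)
    (hdn : d ∣ n) (σ : MulAut M) (hσ : σ ^ d = 1) (m : ℕ) (hm : m = n / d)
    (b t I : M) (hb : σ b = b) (hbt : b ^ (n / d) = t * I * (σ I)⁻¹) :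
    (twistedShift σ (fun i : Fin m => b ^ (i : ℕ) * I) *
        (fun i : Fin m => b ^ (i : ℕ) * I)⁻¹ =
      fun i : Fin m => if (i : ℕ) = 0 then t * b⁻¹ else b⁻¹) ∧
    ((∏ j ∈ Finset.range d, (σ ^ j) t = b⁻¹) →
      (twistedShift σ
          (fun i : Fin m =>
            b ^ (i : ℕ) * ∏ j ∈ Finset.range d, ((σ ^ j) t) ^ (n - j * (n / d))) *
          (fun i : Fin m =>
            b ^ (i : ℕ) * ∏ j ∈ Finset.range d, ((σ ^ j) t) ^ (n - j * (n / d)))⁻¹ =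
        fun i : Fin m => if (i : ℕ) = 0 then b⁻¹ * (t ^ n)⁻¹ else b⁻¹)) := by
  have hdm : d * m = n := by rw [hm]; exact Nat.mul_div_cancel' hdn
  rw [← hm] at hbt ⊢
  refine ⟨shift_aux σ m b t I hb ?_, fun hp => ?_⟩
  · rw [hbt, mul_comm, inv_mul_cancel_right]
  · have key := shift_aux σ m b (t ^ n)⁻¹
      (∏ j ∈ Finset.range d, ((σ ^ j) t) ^ (n - j * m)) hb ?_
    · rw [key]
      simp only [mul_comm]
    · have h1 : σ (∏ j ∈ Finset.range d, ((σ ^ j) t) ^ (n - j * m)) =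
          (∏ j ∈ Finset.range d, ((σ ^ (j + 1)) t) ^ (n - (j + 1) * m)) *
            (b⁻¹) ^ m := by
        have h2 : b⁻¹ = ∏ j ∈ Finset.range d, (σ ^ (j + 1)) t := by
          have h3 := congrArg σ hp
          rw [map_inv, hb, map_prod] at h3
          rw [← h3]
          refine Finset.prod_congr rfl fun j _ => ?_
          rw [pow_succ']; rfl
        rw [h2, ← Finset.prod_pow, ← Finset.prod_mul_distrib, map_prod]
        refine Finset.prod_congr rfl fun j hj => ?_
        have hj' : (j + 1) * m ≤ n := by
          rw [← hdm]
          exact Nat.mul_le_mul_right m (Finset.mem_range.mp hj)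
        rw [← pow_add, map_pow, pow_succ', MulAut.mul_apply]
        congr 1
        rw [add_mul, one_mul] at hj' ⊢
        omega
      have h4 := Finset.prod_range_succ (fun j => ((σ ^ j) t) ^ (n - j * m)) d
      rw [Finset.prod_range_succ'] at h4
      simp only [hdm, Nat.sub_self, pow_zero, mul_one, zero_mul, Nat.sub_zero,
        MulAut.one_apply] at h4
      rw [h1, inv_pow, inv_mul_cancel_right, ← h4, mul_comm, mul_inv_cancel_right]
end
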